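/- Pr(L_n^□ ≤ l) = ∏_{i,j=1}^n (1 - a_i b_j) · Σ_{μ : μ_1 ≤ l} s_μ(a_1,…,a_n) s_μ(b_1,…,b_n), where L_n^□ is the last passage time in the Johansson model with geometric weights. In particular (l = ∞), the Cauchy identity ∏_{i,j}(1-a_i b_j)^{-1} = Σ_μ s_μ(a) s_μ(b) normalizes the measure, so the restriction defines a probability. -/

import Mathlib

open Finset

/-- The complete homogeneous symmetric polynomial `h_k` in `n` variables, evaluated at `x`. -/
def hpoly {R : Type*} [CommRing R] (n k : ℕ) (x : Fin n → R) : R :=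
  ∑ d ∈ Finset.Nat.antidiagonalTuple n k, ∏ i, x i ^ d i

/-- `h_k` extended to integer index: zero for negative `k`. -/
def hpolyZ {R : Type*} [CommRing R] (n : ℕ) (k : ℤ) (x : Fin n → R) : R :=
  if 0 ≤ k then hpoly n k.toNat x else 0

/-- The Schur polynomial `s_μ(x_1,…,x_n)` of a partition `μ` with at most `n` parts,
via the Jacobi–Trudi determinant `det[h_{μ_i - i + j}]_{i,j=1..n}`. -/
def schur {R : Type*} [CommRing R] (n : ℕ) (μ : Fin n → ℕ) (x : Fin n → R) : R :=
  Matrix.det (Matrix.of fun i j : Fin n =>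
    hpolyZ n ((μ i : ℤ) - ((i : ℕ) : ℤ) + ((j : ℕ) : ℤ)) x)

/-- Number of `true`s among the first `k` entries of `d`. -/
def trueCount {m : ℕ} (d : Fin m → Bool) (k : ℕ) : ℕ :=
  ((Finset.univ : Finset (Fin m)).filter (fun i : Fin m => i.1 < k ∧ d i = true)).card

/-- The cell of the lattice `{1,…,n}²` visited after `k` steps of the up/right path with
step directions `d` (`true` = up), starting at the corner `(1,1)` (`0`-based here). -/
def pathCell (n : ℕ) (hn : 0 < n) (d : Fin (2 * (n - 1)) → Bool) (k : ℕ) : Fin n × Fin n :=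
  (⟨min (trueCount d k) (n - 1), by omega⟩, ⟨min (k - trueCount d k) (n - 1), by omega⟩)

/-- The last passage time `L_n^□`: the maximum, over all up/right lattice paths from `(1,1)`
to `(n,n)`, of the sum of the matrix entries along the path. -/
def lastPassage (n : ℕ) (hn : 0 < n) (x : Fin n → Fin n → ℕ) : ℕ :=
  (((Finset.univ : Finset (Fin (2 * (n - 1)) → Bool)).filter
      (fun d => ((Finset.univ : Finset (Fin (2 * (n - 1)))).filter
        (fun i => d i = true)).card = n - 1)).sup
    (fun d => ∑ k ∈ Finset.range (2 * n - 1),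
      x (pathCell n hn d k).1 (pathCell n hn d k).2))

/-!
The Robinson–Schensted–Knuth correspondence is realized by growth diagrams. A local rule builds
the shape at the corner `(p + 1, q + 1)` of the array from the shapes at the three neighbouring
corners and the entry of the cell, and it is invertible on interlacing shapes; hence the array is
encoded by the shapes on the two far sides of its growth diagram, which are two Gelfand–Tsetlin
patterns with the same top row `μ`. On first parts the local rule is the recursion for last passage
times, so `μ₁` is the last passage time of the array. The rule adds the entry of the cell to the
sizes of the shapes, so the weight `∏ (a i * b j) ^ y i j` is the product of the weights of the two
patterns. Summing over the patterns with top row `μ` gives `s_μ(a) s_μ(b)`, because the Jacobi–Trudi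
determinant satisfies the branching rule. Both claims are then the same sum over `μ`, with or
without the bound on `μ₁`.
-/

section Branching

variable {R : Type*} [CommRing R]

theorem hpoly_succ (n k : ℕ) (x : Fin (n + 1) → R) :
    hpoly (n + 1) k x =
      ∑ p ∈ antidiagonal k, x (Fin.last n) ^ p.1 * hpoly n p.2 (Fin.init x) := by
  simp only [hpoly, mul_sum, sum_sigma']
  refine sum_nbij' (fun d => ⟨(d (Fin.last n), ∑ i, Fin.init d i), Fin.init d⟩)
    (fun s => Fin.snoc (α := fun _ => ℕ) s.2 s.1.1) ?_ ?_ ?_ ?_ ?_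
  · intro d hd
    simpa [Nat.mem_antidiagonalTuple, Fin.sum_univ_castSucc, Fin.init, add_comm] using hd
  · rintro ⟨⟨i, j⟩, d⟩ hd
    simp only [mem_sigma, HasAntidiagonal.mem_antidiagonal, Nat.mem_antidiagonalTuple] at hd
    simp [Nat.mem_antidiagonalTuple, Fin.sum_univ_castSucc, hd.2, hd.1, add_comm j]
  · intro d _
    exact Fin.snoc_init_self d
  · rintro ⟨⟨i, j⟩, d⟩ hd
    simp only [mem_sigma, Nat.mem_antidiagonalTuple] at hd
    simp [hd.2]
  · intro d _
    simp [Fin.prod_univ_castSucc, Fin.init, mul_comm]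

theorem hpolyZ_of_neg (n : ℕ) {k : ℤ} (hk : k < 0) (x : Fin n → R) : hpolyZ n k x = 0 :=
  if_neg hk.not_ge

theorem hpolyZ_natCast (n k : ℕ) (x : Fin n → R) : hpolyZ n k x = hpoly n k x := by
  simp [hpolyZ]

theorem hpolyZ_zero_left (k : ℤ) (x : Fin 0 → R) : hpolyZ 0 k x = if k = 0 then 1 else 0 := by
  rcases lt_or_ge k 0 with hk | hk
  · rw [hpolyZ_of_neg _ hk, if_neg hk.ne]
  · lift k to ℕ using hk
    rw [hpolyZ_natCast, hpoly]
    cases k with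
    | zero => simp
    | succ k => simp [Nat.cast_add_one_ne_zero]

theorem hpolyZ_succ (n : ℕ) (k : ℤ) (x : Fin (n + 1) → R) :
    hpolyZ (n + 1) k x =
      x (Fin.last n) * hpolyZ (n + 1) (k - 1) x + hpolyZ n k (Fin.init x) := by
  rcases lt_or_ge k 0 with hk | hk
  · simp [hpolyZ_of_neg, hk, show k - 1 < 0 by omega]
  lift k to ℕ using hk
  cases k with
  | zero =>
    rw [hpolyZ_of_neg (n + 1) (show ((0 : ℕ) : ℤ) - 1 < 0 by simp), hpolyZ_natCast,
      hpolyZ_natCast, hpoly_succ]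
    simp
  | succ k =>
    rw [Nat.cast_succ, add_sub_cancel_right, ← Nat.cast_succ]
    simp only [hpolyZ_natCast, hpoly_succ n, Nat.antidiagonal_succ, sum_cons, sum_map, mul_sum]
    simp [pow_succ', mul_assoc, add_comm]

/-- The witness is the coefficient sequence of `∏ i, (1 - x i * z)`, the inverse of the generating
series of the `h_k`. -/
theorem exists_sum_mul_hpolyZ_eq_ite (n : ℕ) (x : Fin n → R) :
    ∃ c : ℕ → R, c 0 = 1 ∧ ∀ m : ℤ,
      ∑ k ∈ range (n + 1), c k * hpolyZ n (m - k) x = if m = 0 then 1 else 0 := by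
  induction n with
  | zero => exact ⟨1, rfl, fun m => by
      simp only [zero_add, sum_range_one, hpolyZ_zero_left]
      simp⟩
  | succ n ih =>
    obtain ⟨c, h0, hc⟩ := ih (Fin.init x)
    refine ⟨fun k => (if k < n + 1 then c k else 0) -
      x (Fin.last n) * (if k = 0 then 0 else c (k - 1)), by simp [h0], fun m => ?_⟩
    rw [← hc m]
    simp only [sub_mul, sum_sub_distrib]
    rw [sum_range_succ, sum_range_succ' _ (n + 1)]
    simp only [lt_irrefl, if_false, zero_mul, add_zero, if_true, mul_zero, Nat.add_eq_zero_iff,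
      one_ne_zero, and_false, Nat.add_sub_cancel, ← sum_sub_distrib]
    refine sum_congr rfl fun k hk => ?_
    rw [if_pos (mem_range.1 hk), hpolyZ_succ n (m - k), Nat.cast_succ, ← sub_sub]
    ring

theorem exists_sum_mul_hpolyZ_eq_pow (n : ℕ) (x : Fin (n + 1) → R) :
    ∃ c : ℕ → R, c 0 = 1 ∧ ∀ m : ℕ,
      ∑ k ∈ range (n + 1), c k * hpolyZ (n + 1) (m - k) x = x (Fin.last n) ^ m := by
  obtain ⟨c, h0, hc⟩ := exists_sum_mul_hpolyZ_eq_ite n (Fin.init x)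
  have recursion (m : ℤ) : ∑ k ∈ range (n + 1), c k * hpolyZ (n + 1) (m - k) x =
      x (Fin.last n) * ∑ k ∈ range (n + 1), c k * hpolyZ (n + 1) (m - 1 - k) x +
        if m = 0 then 1 else 0 := by
    rw [← hc m, mul_sum, ← sum_add_distrib]
    refine sum_congr rfl fun k _ => ?_
    rw [hpolyZ_succ n (m - k), sub_right_comm]
    ring
  refine ⟨c, h0, fun m => ?_⟩
  induction m with
  | zero =>
    rw [recursion, sum_eq_zero fun k _ => by rw [hpolyZ_of_neg _ (by omega), mul_zero]]
    simp
  | succ m ih =>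
    rw [recursion, Nat.cast_succ, add_sub_cancel_right, ih, if_neg (by omega), add_zero, pow_succ']

theorem sum_Icc_pow_mul_hpolyZ (n : ℕ) {u v : ℕ} (huv : u ≤ v) (c : ℤ) (x : Fin (n + 1) → R) :
    ∑ r ∈ Icc u v, x (Fin.last n) ^ (v - r) * hpolyZ n (r + c) (Fin.init x) =
      hpolyZ (n + 1) (v + c) x -
        x (Fin.last n) ^ (v + 1 - u) * hpolyZ (n + 1) (u - 1 + c) x := by
  induction v, huv using Nat.le_induction with
  | base =>
    rw [hpolyZ_succ n (u + c), sub_add_eq_add_sub, Nat.add_sub_cancel_left]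
    simp
  | succ v huv ih =>
    have step : ∀ r ∈ Icc u v, x (Fin.last n) ^ (v + 1 - r) * hpolyZ n (r + c) (Fin.init x) =
        x (Fin.last n) * (x (Fin.last n) ^ (v - r) * hpolyZ n (r + c) (Fin.init x)) := by
      intro r hr
      rw [Nat.succ_sub (mem_Icc.1 hr).2, pow_succ', mul_assoc]
    rw [sum_Icc_succ_top (by omega), sum_congr rfl step, ← mul_sum, ih,
      hpolyZ_succ n ((v + 1 : ℕ) + c), Nat.cast_succ, add_right_comm, add_sub_cancel_right,
      Nat.succ_sub (show u ≤ v + 1 by omega), pow_succ', Nat.sub_self, pow_zero, one_mul]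
    ring

theorem det_eq_mul_det_of_last_col {n : ℕ} (A : Matrix (Fin (n + 1)) (Fin (n + 1)) R)
    (c : Fin n → R)
    (hA : ∀ i : Fin n, A i.castSucc (Fin.last n) = c i * A i.succ (Fin.last n)) :
    A.det = A (Fin.last n) (Fin.last n) *
      (Matrix.of fun i j : Fin n =>
        A i.castSucc j.castSucc - c i * A i.succ j.castSucc).det := by
  let B : Matrix (Fin (n + 1)) (Fin (n + 1)) R := Matrix.of fun i j =>
    Fin.lastCases (A (Fin.last n) j) (fun i => A i.castSucc j - c i * A i.succ j) i
  have hAB : A.det = B.det := by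
    rw [← Matrix.det_submatrix_equiv_self Fin.revPerm A,
      ← Matrix.det_submatrix_equiv_self Fin.revPerm B]
    refine Matrix.det_eq_of_forall_row_eq_smul_add_pred (fun i => c i.rev) ?_ ?_
    · simp [B]
    · simp [B, Fin.rev_succ, Fin.rev_castSucc]
  rw [hAB, Matrix.det_succ_column B (Fin.last n), Fin.sum_univ_castSucc, sum_eq_zero]
  · have hminor : B.submatrix (Fin.last n).succAbove (Fin.last n).succAbove =
        Matrix.of fun i j : Fin n => A i.castSucc j.castSucc - c i * A i.succ j.castSucc := by
      ext i j
      simp [B]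
    rw [hminor, zero_add, Even.neg_one_pow ⟨_, rfl⟩, one_mul]
    simp [B]
  · intro i _
    simp [B, hA]

theorem det_sum_row {ι κ : Type*} [Fintype ι] [DecidableEq ι] (s : ι → Finset κ)
    (c : ι → κ → R) (v : ι → κ → ι → R) :
    (Matrix.of fun i j => ∑ r ∈ s i, c i r * v i r j).det =
      ∑ f ∈ Fintype.piFinset s, (∏ i, c i (f i)) * (Matrix.of fun i j => v i (f i) j).det := by
  classical
  have expand := (Matrix.detRowAlternating (n := ι) (R := R)).toMultilinearMap.map_sum_finset
    (fun i r => c i r • v i r) s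
  have hrow : (Matrix.of fun i j => ∑ r ∈ s i, c i r * v i r j) =
      fun i => ∑ r ∈ s i, c i r • v i r := by
    ext i j
    simp
  rw [Matrix.det, hrow]
  refine expand.trans (sum_congr rfl fun f _ => ?_)
  exact MultilinearMap.map_smul_univ _ _ _

theorem schur_succ_eq_det_last_col (n : ℕ) (μ : Fin (n + 1) → ℕ) (x : Fin (n + 1) → R) :
    schur (n + 1) μ x =
      ((Matrix.of fun i j : Fin (n + 1) =>
        hpolyZ (n + 1) ((μ i : ℤ) - (i : ℕ) + (j : ℕ)) x).updateCol
          (Fin.last n) fun i => x (Fin.last n) ^ (μ i + (n - i))).det := by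
  obtain ⟨c, h0, hc⟩ := exists_sum_mul_hpolyZ_eq_pow n x
  set J := Matrix.of fun i j : Fin (n + 1) => hpolyZ (n + 1) ((μ i : ℤ) - (i : ℕ) + (j : ℕ)) x
  have hcol : (fun i : Fin (n + 1) => x (Fin.last n) ^ (μ i + (n - i))) =
      fun i => ∑ j : Fin (n + 1), c (n - j) • J i j := by
    ext i
    rw [← hc, ← sum_range_reflect, sum_range]
    refine sum_congr rfl fun j _ => ?_
    rw [smul_eq_mul, Nat.add_sub_cancel]
    congr 2
    push_cast [Fin.is_le]
    ring
  rw [hcol, Matrix.det_updateCol_sum, Fin.val_last, Nat.sub_self, h0, one_smul, schur]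

theorem schur_succ (n : ℕ) {μ : Fin (n + 1) → ℕ} (hμ : Antitone μ) (x : Fin (n + 1) → R) :
    schur (n + 1) μ x =
      ∑ κ ∈ Fintype.piFinset fun i : Fin n => Icc (μ i.succ) (μ i.castSucc),
        x (Fin.last n) ^ (∑ i, μ i - ∑ i, κ i) * schur n κ (Fin.init x) := by
  have hle (i : Fin n) : μ i.succ ≤ μ i.castSucc := hμ i.castSucc_lt_succ.le
  rw [schur_succ_eq_det_last_col, det_eq_mul_det_of_last_col _
    fun i => x (Fin.last n) ^ (μ i.castSucc + 1 - μ i.succ)]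
  · have hminor (i j : Fin n) :
        hpolyZ (n + 1) ((μ i.castSucc : ℤ) - (i : ℕ) + (j : ℕ)) x -
          x (Fin.last n) ^ (μ i.castSucc + 1 - μ i.succ) *
            hpolyZ (n + 1) ((μ i.succ : ℤ) - (i + 1 : ℕ) + (j : ℕ)) x =
        ∑ r ∈ Icc (μ i.succ) (μ i.castSucc), x (Fin.last n) ^ (μ i.castSucc - r) *
          hpolyZ n ((r : ℤ) - (i : ℕ) + (j : ℕ)) (Fin.init x) := by
      have shift (z : ℤ) : z + ((j : ℤ) - i) = z - i + j := by ring
      simpa only [shift, Nat.cast_succ, sub_add_eq_sub_sub_swap] using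
        (sum_Icc_pow_mul_hpolyZ n (hle i) ((j : ℤ) - i) x).symm
    simp only [Matrix.updateCol_apply, Fin.castSucc_ne_last, if_true, if_false, Matrix.of_apply,
      Fin.val_castSucc, Fin.val_succ, hminor, det_sum_row, mul_sum, prod_pow_eq_pow_sum]
    refine sum_congr rfl fun κ hκ => ?_
    have hκle (i : Fin n) : κ i ≤ μ i.castSucc := (mem_Icc.1 (Fintype.mem_piFinset.1 hκ i)).2
    rw [← mul_assoc, ← pow_add, schur, Fin.sum_univ_castSucc,
      sum_tsub_distrib _ fun i _ => hκle i, Nat.sub_add_comm (sum_le_sum fun i _ => hκle i)]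
    simp [add_comm]
  · intro i
    simp only [Matrix.updateCol_self, ← pow_add]
    have := hle i
    have := i.isLt
    congr 1
    simp only [Fin.val_castSucc, Fin.val_succ]
    omega

end Branching

section LocalRule

/-- `μ / κ` is a horizontal strip: the parts of the sequences `κ` and `μ` interlace. -/
def Interlace (κ μ : ℕ →₀ ℕ) : Prop := ∀ i, κ i ≤ μ i ∧ μ (i + 1) ≤ κ i

/-- Fomin's local rule for the Robinson–Schensted–Knuth correspondence: the shape at the fourth
corner of a unit square with entry `x` whose other corners are `κ` and its neighbours `ν`, `ρ`.
The overlap `ν ⊓ ρ - κ` is moved down by one row, and `x` is added to the first row. -/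
noncomputable def localRule (κ ν ρ : ℕ →₀ ℕ) (x : ℕ) : ℕ →₀ ℕ :=
  ν ⊔ ρ + (ν ⊓ ρ - κ).mapDomain Nat.succ + Finsupp.single 0 x

/-- The corner `κ` of a unit square recovered from the other three by `localRule`. -/
noncomputable def reverseRule (ν ρ σ : ℕ →₀ ℕ) : ℕ →₀ ℕ :=
  ν ⊓ ρ - (σ - ν ⊔ ρ).comapDomain Nat.succ Nat.succ_injective.injOn

variable {κ ν ρ σ : ℕ →₀ ℕ} {x : ℕ}

@[simp]
theorem localRule_apply_zero : localRule κ ν ρ x 0 = max (ν 0) (ρ 0) + x := by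
  simp [localRule, Finsupp.mapDomain_of_notMem_range]

@[simp]
theorem localRule_apply_succ (i : ℕ) :
    localRule κ ν ρ x (i + 1) = max (ν (i + 1)) (ρ (i + 1)) + (min (ν i) (ρ i) - κ i) := by
  have := Finsupp.mapDomain_apply Nat.succ_injective (ν ⊓ ρ - κ) i
  simp_all [localRule]

@[simp]
theorem reverseRule_apply (i : ℕ) :
    reverseRule ν ρ σ i = min (ν i) (ρ i) - (σ (i + 1) - max (ν (i + 1)) (ρ (i + 1))) := by
  simp [reverseRule]

theorem Interlace.le (h : Interlace κ ν) : κ ≤ ν := fun i => (h i).1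

theorem interlace_zero_right : Interlace κ 0 ↔ κ = 0 :=
  ⟨fun h => Finsupp.ext fun i => Nat.le_zero.1 (h i).1, fun h i => by simp [h]⟩

theorem localRule_comm (κ ν ρ : ℕ →₀ ℕ) (x : ℕ) : localRule κ ν ρ x = localRule κ ρ ν x := by
  simp only [localRule, sup_comm, inf_comm]

theorem reverseRule_comm (ν ρ σ : ℕ →₀ ℕ) : reverseRule ν ρ σ = reverseRule ρ ν σ := by
  simp only [reverseRule, sup_comm, inf_comm]

theorem interlace_localRule_left (hν : Interlace κ ν) (hρ : Interlace κ ρ) :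
    Interlace ν (localRule κ ν ρ x) := by
  rintro (_ | i)
  · have := hν 0
    have := hρ 0
    simp only [localRule_apply_zero, localRule_apply_succ, zero_add] at *
    omega
  · have := hν (i + 1)
    have := hρ (i + 1)
    have := hν i
    have := hρ i
    simp only [localRule_apply_succ]
    omega

theorem interlace_localRule_right (hν : Interlace κ ν) (hρ : Interlace κ ρ) :
    Interlace ρ (localRule κ ν ρ x) :=
  localRule_comm κ ν ρ x ▸ interlace_localRule_left hρ hν

theorem degree_localRule (hν : Interlace κ ν) (hρ : Interlace κ ρ) :
    (localRule κ ν ρ x).degree + κ.degree = ν.degree + ρ.degree + x := by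
  have hκ : κ ≤ ν ⊓ ρ := le_inf hν.le hρ.le
  have hsup : (ν ⊔ ρ).degree + (ν ⊓ ρ).degree = ν.degree + ρ.degree := by
    rw [← map_add, ← map_add]
    exact congrArg _ (Finsupp.ext fun i => max_add_min (ν i) (ρ i))
  have hsub : (ν ⊓ ρ - κ).degree + κ.degree = (ν ⊓ ρ).degree := by
    rw [← map_add, tsub_add_cancel_of_le hκ]
  simp only [localRule, map_add, Finsupp.degree_mapDomain, Finsupp.degree_single]
  omega

theorem reverseRule_localRule (hν : Interlace κ ν) (hρ : Interlace κ ρ) :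
    reverseRule ν ρ (localRule κ ν ρ x) = κ := by
  ext i
  have := hν i
  have := hρ i
  simp only [reverseRule_apply, localRule_apply_succ]
  omega

theorem interlace_reverseRule_left (hν : Interlace ν σ) (hρ : Interlace ρ σ) :
    Interlace (reverseRule ν ρ σ) ν := by
  intro i
  have := hν i
  have := hρ i
  have := hν (i + 1)
  have := hρ (i + 1)
  simp only [reverseRule_apply]
  omega

theorem interlace_reverseRule_right (hν : Interlace ν σ) (hρ : Interlace ρ σ) :
    Interlace (reverseRule ν ρ σ) ρ :=
  reverseRule_comm ν ρ σ ▸ interlace_reverseRule_left hρ hν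

theorem localRule_reverseRule (hν : Interlace ν σ) (hρ : Interlace ρ σ) :
    localRule (reverseRule ν ρ σ) ν ρ (σ 0 - max (ν 0) (ρ 0)) = σ := by
  ext (_ | i)
  · have := hν 0
    have := hρ 0
    simp only [localRule_apply_zero]
    omega
  · have := hν i
    have := hρ i
    have := hν (i + 1)
    have := hρ (i + 1)
    simp only [localRule_apply_succ, reverseRule_apply]
    omega

end LocalRule

section GrowthDiagram

/-- The growth diagram of the array `y`: the shape at the corner `(p, q)` is the one that the
Robinson–Schensted–Knuth correspondence assigns to the entries `y i j` with `i < p`, `j < q`. -/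
noncomputable def growth (y : ℕ → ℕ → ℕ) : ℕ → ℕ → ℕ →₀ ℕ
  | 0, _ => 0
  | _ + 1, 0 => 0
  | p + 1, q + 1 => localRule (growth y p q) (growth y p (q + 1)) (growth y (p + 1) q) (y p q)

/-- A growth diagram run backwards from its far corner: given the shapes `P j` and `Q i` along the
two far sides, where `P 0 = Q 0` is the corner, the shape `i` steps and `j` steps back. -/
noncomputable def reverseGrowth (P Q : ℕ → ℕ →₀ ℕ) : ℕ → ℕ → ℕ →₀ ℕ
  | 0, j => P j
  | i + 1, 0 => Q (i + 1)
  | i + 1, j + 1 => reverseRule (reverseGrowth P Q (i + 1) j) (reverseGrowth P Q i (j + 1))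
      (reverseGrowth P Q i j)

/-- The last passage time from the cell `(0, 0)` to the cell `(p - 1, q - 1)` of the array `y`;
it is `0` for `p = 0` or `q = 0`. -/
def passageTime (y : ℕ → ℕ → ℕ) : ℕ → ℕ → ℕ
  | 0, _ => 0
  | _ + 1, 0 => 0
  | p + 1, q + 1 => max (passageTime y p (q + 1)) (passageTime y (p + 1) q) + y p q

variable {y : ℕ → ℕ → ℕ}

@[simp]
theorem growth_zero_left (q : ℕ) : growth y 0 q = 0 := by
  rw [growth]

@[simp]
theorem growth_zero_right (p : ℕ) : growth y p 0 = 0 := by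
  cases p <;> rw [growth]

theorem growth_succ_succ (p q : ℕ) : growth y (p + 1) (q + 1) =
    localRule (growth y p q) (growth y p (q + 1)) (growth y (p + 1) q) (y p q) := by
  rw [growth]

theorem reverseGrowth_zero_right {P Q : ℕ → ℕ →₀ ℕ} (hPQ : P 0 = Q 0) (i : ℕ) :
    reverseGrowth P Q i 0 = Q i := by
  cases i <;> rw [reverseGrowth]
  exact hPQ

theorem reverseGrowth_succ_succ (P Q : ℕ → ℕ →₀ ℕ) (i j : ℕ) :
    reverseGrowth P Q (i + 1) (j + 1) =
      reverseRule (reverseGrowth P Q (i + 1) j) (reverseGrowth P Q i (j + 1))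
        (reverseGrowth P Q i j) := by
  rw [reverseGrowth]

@[simp]
theorem passageTime_zero_left (q : ℕ) : passageTime y 0 q = 0 := by
  rw [passageTime]

@[simp]
theorem passageTime_zero_right (p : ℕ) : passageTime y p 0 = 0 := by
  cases p <;> rw [passageTime]

theorem passageTime_succ_succ (p q : ℕ) : passageTime y (p + 1) (q + 1) =
    max (passageTime y p (q + 1)) (passageTime y (p + 1) q) + y p q := by
  rw [passageTime]

variable (y) in
theorem interlace_growth (p q : ℕ) : Interlace (growth y p q) (growth y p (q + 1)) ∧
    Interlace (growth y p q) (growth y (p + 1) q) := by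
  induction p generalizing q with
  | zero =>
    refine ⟨fun i => by simp, ?_⟩
    induction q with
    | zero => exact fun i => by simp
    | succ q ih =>
      rw [growth_succ_succ]
      exact interlace_localRule_left (fun i => by simp) ih
  | succ p ihp =>
    have right (q : ℕ) : Interlace (growth y (p + 1) q) (growth y (p + 1) (q + 1)) := by
      rw [growth_succ_succ]
      exact interlace_localRule_right (ihp q).1 (ihp q).2
    refine ⟨right q, ?_⟩
    induction q with
    | zero => exact fun i => by simp
    | succ q ihq =>
      rw [growth_succ_succ (p + 1)]
      exact interlace_localRule_left (right q) ihq

theorem degree_growth (p q : ℕ) :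
    (growth y p q).degree = ∑ i ∈ range p, ∑ j ∈ range q, y i j := by
  induction p generalizing q with
  | zero => simp
  | succ p ihp =>
    induction q with
    | zero => simp
    | succ q ihq =>
      have ⟨hright, hup⟩ := interlace_growth y p q
      have step := degree_localRule (x := y p q) hright hup
      rw [← growth_succ_succ, ihp, ihp, ihq] at step
      simp only [sum_range_succ _ p, sum_range_succ _ q, sum_add_distrib] at step ⊢
      omega

theorem growth_apply_zero (p q : ℕ) : growth y p q 0 = passageTime y p q := by
  induction p generalizing q with
  | zero => simp
  | succ p ihp =>
    induction q with
    | zero => simp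
    | succ q ihq => rw [growth_succ_succ, localRule_apply_zero, ihp, ihq, passageTime_succ_succ]

theorem le_passageTime {p q i j : ℕ} (hi : i < p) (hj : j < q) : y i j ≤ passageTime y p q := by
  induction p generalizing q with
  | zero => omega
  | succ p ihp =>
    induction q with
    | zero => omega
    | succ q ihq =>
      rw [passageTime_succ_succ]
      rcases Nat.lt_succ_iff_lt_or_eq.1 hi with hip | rfl
      · have := ihp hip hj
        omega
      · rcases Nat.lt_succ_iff_lt_or_eq.1 hj with hjq | rfl
        · have := ihq hjq
          omega
        · omega

theorem reverseGrowth_growth {k m i j : ℕ} (hi : i ≤ k) (hj : j ≤ m) :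
    reverseGrowth (fun j => growth y k (m - j)) (fun i => growth y (k - i) m) i j =
      growth y (k - i) (m - j) := by
  induction i generalizing j with
  | zero => rw [reverseGrowth, Nat.sub_zero]
  | succ i ihi =>
    induction j with
    | zero => rw [reverseGrowth, Nat.sub_zero]
    | succ j ihj =>
      obtain ⟨p, hp⟩ : ∃ p, k - i = p + 1 := ⟨k - i - 1, by omega⟩
      obtain ⟨q, hq⟩ : ∃ q, m - j = q + 1 := ⟨m - j - 1, by omega⟩
      rw [reverseGrowth, ihj (by omega), ihi (by omega) hj, ihi (by omega) (by omega),
        ← Nat.sub_sub, ← Nat.sub_sub, hp, hq, Nat.add_sub_cancel, Nat.add_sub_cancel,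
        growth_succ_succ,
        reverseRule_localRule (interlace_growth y p q).1 (interlace_growth y p q).2]

theorem eq_of_growth_eq {z : ℕ → ℕ → ℕ} {k m : ℕ} (hrow : ∀ j ≤ m, growth y k j = growth z k j)
    (hcol : ∀ i ≤ k, growth y i m = growth z i m) {i j : ℕ} (hi : i < k) (hj : j < m) :
    y i j = z i j := by
  have hgrowth {i j : ℕ} (hi : i ≤ k) (hj : j ≤ m) : growth y i j = growth z i j := by
    rw [← Nat.sub_sub_self hi, ← Nat.sub_sub_self hj,
      ← reverseGrowth_growth (Nat.sub_le _ _) (Nat.sub_le _ _),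
      ← reverseGrowth_growth (Nat.sub_le _ _) (Nat.sub_le _ _)]
    simp only [hrow _ (Nat.sub_le _ _), hcol _ (Nat.sub_le _ _)]
  have := hgrowth (i := i + 1) (j := j + 1) hi hj
  rw [growth_succ_succ, growth_succ_succ, hgrowth hi.le hj, hgrowth hi hj.le] at this
  simpa using DFunLike.congr_fun this 0

variable {P Q : ℕ → ℕ →₀ ℕ}

theorem interlace_reverseGrowth (hP : ∀ j, Interlace (P (j + 1)) (P j))
    (hQ : ∀ i, Interlace (Q (i + 1)) (Q i)) (hPQ : P 0 = Q 0) (i j : ℕ) :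
    Interlace (reverseGrowth P Q i (j + 1)) (reverseGrowth P Q i j) ∧
      Interlace (reverseGrowth P Q (i + 1) j) (reverseGrowth P Q i j) := by
  induction i generalizing j with
  | zero =>
    have right (j : ℕ) : Interlace (reverseGrowth P Q 0 (j + 1)) (reverseGrowth P Q 0 j) := by
      simpa only [reverseGrowth] using hP j
    refine ⟨right j, ?_⟩
    induction j with
    | zero => simpa only [reverseGrowth_zero_right hPQ] using hQ 0
    | succ j ihj =>
      rw [reverseGrowth_succ_succ]
      exact interlace_reverseRule_right ihj (right j)
  | succ i ihi =>
    have right (j : ℕ) :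
        Interlace (reverseGrowth P Q (i + 1) (j + 1)) (reverseGrowth P Q (i + 1) j) := by
      rw [reverseGrowth_succ_succ]
      exact interlace_reverseRule_left (ihi j).2 (ihi j).1
    refine ⟨right j, ?_⟩
    induction j with
    | zero => simpa only [reverseGrowth_zero_right hPQ] using hQ (i + 1)
    | succ j ihj =>
      rw [reverseGrowth_succ_succ P Q (i + 1)]
      exact interlace_reverseRule_right ihj (right j)

theorem growth_eq_reverseGrowth (hP : ∀ j, Interlace (P (j + 1)) (P j))
    (hQ : ∀ i, Interlace (Q (i + 1)) (Q i)) (hPQ : P 0 = Q 0) {k m : ℕ} (hPm : P m = 0)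
    (hQk : Q k = 0)
    (hy : ∀ p < k, ∀ q < m, y p q = reverseGrowth P Q (k - (p + 1)) (m - (q + 1)) 0 -
      max (reverseGrowth P Q (k - p) (m - (q + 1)) 0) (reverseGrowth P Q (k - (p + 1)) (m - q) 0))
    {p q : ℕ} (hp : p ≤ k) (hq : q ≤ m) :
    growth y p q = reverseGrowth P Q (k - p) (m - q) := by
  have hR := interlace_reverseGrowth hP hQ hPQ
  induction p generalizing q with
  | zero =>
    have bottom (j : ℕ) : reverseGrowth P Q k j = 0 := by
      induction j with
      | zero => rw [reverseGrowth_zero_right hPQ, hQk]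
      | succ j ihj => exact interlace_zero_right.1 (ihj ▸ (hR k j).1)
    rw [growth_zero_left, Nat.sub_zero, bottom]
  | succ p ihp =>
    induction q with
    | zero =>
      have left (i : ℕ) : reverseGrowth P Q i m = 0 := by
        induction i with
        | zero => rw [reverseGrowth, hPm]
        | succ i ihi => exact interlace_zero_right.1 (ihi ▸ (hR i m).2)
      rw [growth_zero_right, Nat.sub_zero, left]
    | succ q ihq =>
      rw [growth_succ_succ, ihp (by omega) (by omega), ihp (by omega) hq, ihq (by omega),
        hy p hp q hq]
      rw [show k - p = k - (p + 1) + 1 by omega, show m - q = m - (q + 1) + 1 by omega,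
        reverseGrowth_succ_succ]
      exact localRule_reverseRule (hR _ _).2 (hR _ _).1

end GrowthDiagram

section GelfandTsetlin

/-- The sequence `μ 0, …, μ (m - 1), 0, 0, …`. -/
noncomputable def toShape {m : ℕ} (μ : Fin m → ℕ) : ℕ →₀ ℕ :=
  (Finsupp.equivFunOnFinite.symm μ).embDomain Fin.valEmbedding

open Classical in
/-- Gelfand–Tsetlin patterns with `m` rows and top row `μ`, that is, semistandard Young tableaux of
shape `μ` with entries in `{1, …, m}`: `c i` is the shape formed by the entries at most `i`. -/
noncomputable def gtPatterns (m : ℕ) (μ : ℕ →₀ ℕ) : Finset (Fin (m + 1) → ℕ →₀ ℕ) :=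
  {c ∈ Finset.Iic fun _ => μ |
    c 0 = 0 ∧ c (Fin.last m) = μ ∧ ∀ i : Fin m, Interlace (c i.castSucc) (c i.succ)}

/-- The monomial `∏ i, x i ^ (number of entries i)` of a Gelfand–Tsetlin pattern. -/
noncomputable def gtWeight {M : Type*} [CommMonoid M] {m : ℕ} (x : Fin m → M)
    (c : Fin (m + 1) → ℕ →₀ ℕ) : M :=
  ∏ i : Fin m, x i ^ ((c i.succ).degree - (c i.castSucc).degree)

theorem toShape_apply {m : ℕ} (μ : Fin m → ℕ) (i : Fin m) : toShape μ i = μ i :=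
  Finsupp.embDomain_apply_self Fin.valEmbedding _ i

theorem toShape_apply_of_le {m : ℕ} (μ : Fin m → ℕ) {i : ℕ} (hi : m ≤ i) : toShape μ i = 0 :=
  Finsupp.embDomain_of_notMem_range _ _ _ <| by
    rintro ⟨j, rfl⟩
    exact j.isLt.not_ge hi

theorem toShape_injective (m : ℕ) : Function.Injective (toShape (m := m)) :=
  (Finsupp.embDomain_injective _).comp Finsupp.equivFunOnFinite.symm.injective

theorem degree_toShape {m : ℕ} (μ : Fin m → ℕ) : (toShape μ).degree = ∑ i, μ i := by
  simp [toShape, Finsupp.embDomain_eq_mapDomain, Finsupp.degree_mapDomain,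
    Finsupp.degree_eq_sum]

theorem toShape_restrict {m : ℕ} {μ : ℕ →₀ ℕ} (hμ : ∀ i, m ≤ i → μ i = 0) :
    toShape (fun i : Fin m => μ i) = μ := by
  ext i
  rcases lt_or_ge i m with hi | hi
  · exact toShape_apply _ ⟨i, hi⟩
  · rw [toShape_apply_of_le _ hi, hμ i hi]

theorem interlace_toShape {m : ℕ} {κ : Fin m → ℕ} {μ : Fin (m + 1) → ℕ} :
    Interlace (toShape κ) (toShape μ) ↔ ∀ i, μ i.succ ≤ κ i ∧ κ i ≤ μ i.castSucc := by
  refine ⟨fun h i => ?_, fun h i => ?_⟩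
  · have := h i
    rw [toShape_apply, ← Fin.val_castSucc, toShape_apply, Fin.val_castSucc, ← Fin.val_succ,
      toShape_apply] at this
    exact this.symm
  · rcases lt_or_ge i m with hi | hi
    · lift i to Fin m using hi
      rw [toShape_apply, ← Fin.val_castSucc, toShape_apply, Fin.val_castSucc, ← Fin.val_succ,
        toShape_apply]
      exact (h i).symm
    · simp [toShape_apply_of_le, hi]

theorem mem_gtPatterns {m : ℕ} {μ : ℕ →₀ ℕ} {c : Fin (m + 1) → ℕ →₀ ℕ} :
    c ∈ gtPatterns m μ ↔
      c 0 = 0 ∧ c (Fin.last m) = μ ∧ ∀ i : Fin m, Interlace (c i.castSucc) (c i.succ) := by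
  simp only [gtPatterns, mem_filter, mem_Iic, and_iff_right_iff_imp]
  rintro ⟨-, rfl, hc⟩ i
  exact Fin.monotone_iff_le_succ.2 (fun i => (hc i).le) (Fin.le_last i)

theorem mem_gtPatterns_succ {m : ℕ} {μ : ℕ →₀ ℕ} {c : Fin (m + 2) → ℕ →₀ ℕ} :
    c ∈ gtPatterns (m + 1) μ ↔ Fin.init c ∈ gtPatterns m (c (Fin.last m).castSucc) ∧
      Interlace (c (Fin.last m).castSucc) μ ∧ c (Fin.last (m + 1)) = μ := by
  simp only [mem_gtPatterns, Fin.forall_fin_succ', Fin.init, Fin.castSucc_zero, Fin.succ_last,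
    Fin.succ_castSucc, true_and]
  aesop

theorem eq_zero_of_mem_gtPatterns {m : ℕ} {μ : ℕ →₀ ℕ} {c : Fin (m + 1) → ℕ →₀ ℕ}
    (hc : c ∈ gtPatterns m μ) {i : ℕ} (hi : m ≤ i) : μ i = 0 := by
  induction m generalizing μ i with
  | zero =>
    obtain ⟨h0, rfl, -⟩ := mem_gtPatterns.1 hc
    exact DFunLike.congr_fun h0 i
  | succ m ih =>
    obtain ⟨hinit, hμ, -⟩ := mem_gtPatterns_succ.1 hc
    obtain ⟨i, rfl⟩ : ∃ j, i = j + 1 := ⟨i - 1, by omega⟩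
    exact Nat.le_zero.1 ((hμ i).2.trans_eq (ih hinit (by omega)))

theorem antitone_of_mem_gtPatterns {m : ℕ} {μ : ℕ →₀ ℕ} {c : Fin (m + 1) → ℕ →₀ ℕ}
    (hc : c ∈ gtPatterns m μ) : Antitone μ := by
  cases m with
  | zero =>
    obtain ⟨h0, rfl, -⟩ := mem_gtPatterns.1 hc
    rw [Fin.last_zero, h0]
    exact antitone_const
  | succ m =>
    have hμ := (mem_gtPatterns_succ.1 hc).2.1
    exact antitone_nat_of_succ_le fun i => (hμ i).2.trans (hμ i).1

theorem gtWeight_succ {M : Type*} [CommMonoid M] {m : ℕ} (x : Fin (m + 1) → M)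
    (c : Fin (m + 2) → ℕ →₀ ℕ) :
    gtWeight x c = x (Fin.last m) ^ ((c (Fin.last (m + 1))).degree -
      (c (Fin.last m).castSucc).degree) * gtWeight (Fin.init x) (Fin.init c) := by
  simp [gtWeight, Fin.prod_univ_castSucc, Fin.init, mul_comm]

theorem sum_gtPatterns_succ {M : Type*} [AddCommMonoid M] {m : ℕ} (μ : Fin (m + 1) → ℕ)
    (F : (Fin (m + 2) → ℕ →₀ ℕ) → M) :
    ∑ c ∈ gtPatterns (m + 1) (toShape μ), F c =
      ∑ κ ∈ Fintype.piFinset fun i : Fin m => Icc (μ i.succ) (μ i.castSucc),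
        ∑ c ∈ gtPatterns m (toShape κ), F (Fin.snoc (α := fun _ => ℕ →₀ ℕ) c (toShape μ)) := by
  rw [sum_sigma']
  symm
  refine sum_nbij' (fun s => Fin.snoc (α := fun _ => ℕ →₀ ℕ) s.2 (toShape μ))
    (fun c => ⟨fun i : Fin m => c (Fin.last m).castSucc i, Fin.init c⟩) ?_ ?_ ?_ ?_ fun _ _ => rfl
  · rintro ⟨κ, c⟩ h
    simp only [mem_sigma, Fintype.mem_piFinset, mem_Icc] at h
    rw [mem_gtPatterns_succ]
    simp [interlace_toShape, (mem_gtPatterns.1 h.2).2.1, h]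
  · intro c h
    obtain ⟨hc, hμ, -⟩ := mem_gtPatterns_succ.1 h
    have hκ := toShape_restrict fun i hi => eq_zero_of_mem_gtPatterns hc hi
    rw [← hκ, interlace_toShape] at hμ
    simpa only [mem_sigma, Fintype.mem_piFinset, mem_Icc, hκ] using ⟨hμ, hc⟩
  · rintro ⟨κ, c⟩ h
    have hlast : c (Fin.last m) = toShape κ := (mem_gtPatterns.1 (mem_sigma.1 h).2).2.1
    simp [hlast, toShape_apply]
  · intro c h
    rw [← (mem_gtPatterns_succ.1 h).2.2, Fin.snoc_init_self]

theorem schur_eq_sum_gtPatterns {R : Type*} [CommRing R] {m : ℕ} {μ : Fin m → ℕ}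
    (hμ : Antitone μ) (x : Fin m → R) :
    schur m μ x = ∑ c ∈ gtPatterns m (toShape μ), gtWeight x c := by
  induction m with
  | zero =>
    have h0 : toShape μ = 0 := Finsupp.ext fun i => toShape_apply_of_le μ i.zero_le
    have hpat : gtPatterns 0 (toShape μ) = {0} := by
      ext c
      simp [mem_gtPatterns, h0, funext_iff, Fin.forall_fin_one]
    simp [hpat, schur, gtWeight]
  | succ m ih =>
    rw [schur_succ m hμ, sum_gtPatterns_succ]
    refine sum_congr rfl fun κ hκ => ?_
    simp only [Fintype.mem_piFinset, mem_Icc] at hκ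
    have hanti : Antitone κ := antitone_iff_forall_lt.2 fun i j hij =>
      (hκ j).2.trans ((hμ (Fin.succ_le_castSucc_iff.2 hij)).trans (hκ i).1)
    rw [ih hanti, mul_sum]
    refine sum_congr rfl fun c hc => ?_
    have hlast : c (Fin.last m) = toShape κ := (mem_gtPatterns.1 hc).2.1
    simp [gtWeight_succ, hlast, degree_toShape]

end GelfandTsetlin

section RSK

/-- The array `y` extended by zero to all of `ℕ × ℕ`. -/
def extendByZero {k m : ℕ} (y : Fin k → Fin m → ℕ) (i j : ℕ) : ℕ :=
  if h : i < k ∧ j < m then y ⟨i, h.1⟩ ⟨j, h.2⟩ else 0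

@[simp]
theorem extendByZero_apply {k m : ℕ} (y : Fin k → Fin m → ℕ) (i : Fin k) (j : Fin m) :
    extendByZero y i j = y i j :=
  dif_pos ⟨i.isLt, j.isLt⟩

variable {k m : ℕ}

theorem growth_row_mem_gtPatterns (y : ℕ → ℕ → ℕ) (k m : ℕ) :
    (fun j : Fin (m + 1) => growth y k j) ∈ gtPatterns m (growth y k m) := by
  simpa [mem_gtPatterns] using fun i : Fin m => (interlace_growth y k i).1

theorem growth_col_mem_gtPatterns (y : ℕ → ℕ → ℕ) (k m : ℕ) :
    (fun i : Fin (k + 1) => growth y i m) ∈ gtPatterns k (growth y k m) := by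
  simpa [mem_gtPatterns] using fun i : Fin k => (interlace_growth y i m).2

/-- The Robinson–Schensted–Knuth correspondence between arrays of natural numbers and pairs of
Gelfand–Tsetlin patterns with the same top row. -/
noncomputable def rsk (y : Fin k → Fin m → ℕ) :
    Σ μ : ℕ →₀ ℕ, {PQ // PQ ∈ gtPatterns m μ ×ˢ gtPatterns k μ} :=
  ⟨growth (extendByZero y) k m,
    (fun j => growth (extendByZero y) k j, fun i => growth (extendByZero y) i m),
    mem_product.2 ⟨growth_row_mem_gtPatterns _ k m, growth_col_mem_gtPatterns _ k m⟩⟩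

theorem rsk_injective : Function.Injective (rsk : (Fin k → Fin m → ℕ) → _) := by
  intro y z h
  have hPQ := congrArg (fun s => s.2.1) h
  obtain ⟨hrow, hcol⟩ := Prod.ext_iff.1 hPQ
  ext i j
  rw [← extendByZero_apply y, ← extendByZero_apply z]
  exact eq_of_growth_eq (fun j hj => congrFun hrow ⟨j, Nat.lt_succ_of_le hj⟩)
    (fun i hi => congrFun hcol ⟨i, Nat.lt_succ_of_le hi⟩) i.isLt j.isLt

theorem interlace_reversed_of_mem_gtPatterns {μ : ℕ →₀ ℕ} {c : Fin (m + 1) → ℕ →₀ ℕ}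
    (hc : c ∈ gtPatterns m μ) (j : ℕ) :
    Interlace (c ⟨m - (j + 1), by omega⟩) (c ⟨m - j, by omega⟩) := by
  obtain ⟨h0, -, hc⟩ := mem_gtPatterns.1 hc
  rcases lt_or_ge j m with hj | hj
  · have hsucc : (⟨m - (j + 1), by omega⟩ : Fin m).succ = ⟨m - j, by omega⟩ :=
      Fin.ext (show m - (j + 1) + 1 = m - j by omega)
    exact hsucc ▸ hc ⟨m - (j + 1), by omega⟩
  · simp only [Nat.sub_eq_zero_of_le hj, Nat.sub_eq_zero_of_le (hj.trans j.le_succ)]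
    exact fun i => by simp [show (⟨0, by omega⟩ : Fin (m + 1)) = 0 from rfl, h0]

theorem rsk_surjective : Function.Surjective (rsk : (Fin k → Fin m → ℕ) → _) := by
  rintro ⟨μ, ⟨P, Q⟩, hPQ⟩
  obtain ⟨hP, hQ⟩ := mem_product.1 hPQ
  obtain ⟨hP0, hPμ, -⟩ := mem_gtPatterns.1 hP
  obtain ⟨hQ0, hQμ, -⟩ := mem_gtPatterns.1 hQ
  let R := reverseGrowth (fun j => P ⟨m - j, by omega⟩) fun i => Q ⟨k - i, by omega⟩
  let y (p : Fin k) (q : Fin m) : ℕ := R (k - (p + 1)) (m - (q + 1)) 0 -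
    max (R (k - p) (m - (q + 1)) 0) (R (k - (p + 1)) (m - q) 0)
  have hcorner : P ⟨m - 0, by omega⟩ = Q ⟨k - 0, by omega⟩ := hPμ.trans hQμ.symm
  have hgrowth {p q : ℕ} (hp : p ≤ k) (hq : q ≤ m) :
      growth (extendByZero y) p q = R (k - p) (m - q) :=
    growth_eq_reverseGrowth (interlace_reversed_of_mem_gtPatterns hP)
      (interlace_reversed_of_mem_gtPatterns hQ) hcorner
      (by simpa using hP0) (by simpa using hQ0)
      (fun p hp q hq => dif_pos ⟨hp, hq⟩) hp hq
  have hrow (j : Fin (m + 1)) : growth (extendByZero y) k j = P j := by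
    rw [hgrowth le_rfl j.is_le, Nat.sub_self]
    simp [R, reverseGrowth, Nat.sub_sub_self j.is_le]
  have hcol (i : Fin (k + 1)) : growth (extendByZero y) i m = Q i := by
    rw [hgrowth i.is_le le_rfl, Nat.sub_self]
    exact (reverseGrowth_zero_right hcorner _).trans (by simp [Nat.sub_sub_self i.is_le])
  refine ⟨y, Sigma.subtype_ext ?_ (Prod.ext (funext hrow) (funext hcol))⟩
  exact (hrow (Fin.last m)).trans hPμ

theorem gtWeight_mul_gtWeight_rsk {R : Type*} [CommRing R] (a : Fin k → R) (b : Fin m → R)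
    (y : Fin k → Fin m → ℕ) :
    gtWeight b (rsk y).2.1.1 * gtWeight a (rsk y).2.1.2 = ∏ i, ∏ j, (a i * b j) ^ y i j := by
  have hrow (i : Fin k) : (growth (extendByZero y) (i + 1) m).degree -
      (growth (extendByZero y) i m).degree = ∑ j, y i j := by
    simp [degree_growth, sum_range_succ _ (i : ℕ), sum_range]
  have hcol (j : Fin m) : (growth (extendByZero y) k (j + 1)).degree -
      (growth (extendByZero y) k j).degree = ∑ i, y i j := by
    simp [degree_growth, sum_range_succ _ (j : ℕ), sum_add_distrib, sum_range]
  simp only [gtWeight, rsk, Fin.val_succ, Fin.val_castSucc, hrow, hcol, mul_pow, prod_mul_distrib,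
    prod_pow_eq_pow_sum]
  rw [prod_comm (f := fun i j => b j ^ y i j)]
  simp only [prod_pow_eq_pow_sum, mul_comm]

variable {R : Type*} [CommRing R] [TopologicalSpace R] [IsTopologicalRing R]

theorem hasSum_gtPatterns {f : (ℕ →₀ ℕ) → R} {a : Fin k → R} {b : Fin m → R} {s : R}
    (h : HasSum (fun y : Fin k → Fin m → ℕ =>
      f (growth (extendByZero y) k m) * ∏ i, ∏ j, (a i * b j) ^ y i j) s) :
    HasSum (fun μ => f μ *
      ((∑ P ∈ gtPatterns m μ, gtWeight b P) * ∑ Q ∈ gtPatterns k μ, gtWeight a Q)) s := by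
  simp only [← gtWeight_mul_gtWeight_rsk a b] at h
  have hσ := ((Equiv.ofBijective _ ⟨rsk_injective, rsk_surjective⟩).hasSum_iff
    (f := fun t : Σ μ : ℕ →₀ ℕ, {PQ // PQ ∈ gtPatterns m μ ×ˢ gtPatterns k μ} =>
      f t.1 * (gtWeight b t.2.1.1 * gtWeight a t.2.1.2))).1 h
  refine hσ.sigma fun μ => ?_
  rw [sum_mul_sum, ← sum_product', mul_sum]
  exact Finset.hasSum _ _

theorem hasSum_schur_mul_schur {n : ℕ} {f : (ℕ →₀ ℕ) → R} {a b : Fin n → R} {s : R}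
    (h : HasSum (fun y : Fin n → Fin n → ℕ =>
      f (growth (extendByZero y) n n) * ∏ i, ∏ j, (a i * b j) ^ y i j) s) :
    HasSum (fun μ : {μ : Fin n → ℕ // Antitone μ} =>
      f (toShape μ.1) * (schur n μ.1 a * schur n μ.1 b)) s := by
  have hinj : Function.Injective fun μ : {μ : Fin n → ℕ // Antitone μ} => toShape μ.1 :=
    (toShape_injective n).comp Subtype.val_injective
  have hsupport : ∀ ν ∉ Set.range fun μ : {μ : Fin n → ℕ // Antitone μ} => toShape μ.1,
      f ν * ((∑ P ∈ gtPatterns n ν, gtWeight b P) * ∑ Q ∈ gtPatterns n ν, gtWeight a Q) = 0 := by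
    intro ν hν
    rcases (gtPatterns n ν).eq_empty_or_nonempty with hempty | ⟨c, hc⟩
    · simp [hempty]
    · have hrestrict := toShape_restrict fun i hi => eq_zero_of_mem_gtPatterns hc hi
      have hanti : Antitone fun i : Fin n => ν i := fun i j hij => antitone_of_mem_gtPatterns hc hij
      exact absurd ⟨⟨_, hanti⟩, hrestrict⟩ hν
  convert (hinj.hasSum_iff hsupport).2 (hasSum_gtPatterns h) using 2 with μ
  rw [Function.comp_apply, schur_eq_sum_gtPatterns μ.2, schur_eq_sum_gtPatterns μ.2,
    mul_comm (∑ Q ∈ _, gtWeight a Q)]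

end RSK

section LastPassage

variable {m : ℕ}

theorem trueCount_zero (d : Fin m → Bool) : trueCount d 0 = 0 := by
  simp [trueCount]

theorem trueCount_succ (d : Fin m → Bool) (i : Fin m) :
    trueCount d (i + 1) = trueCount d i + (d i).toNat := by
  have hsucc (j : Fin m) : (j : ℕ) < i + 1 ↔ j < i ∨ j = i := by omega
  simp only [trueCount, hsucc, or_and_right, filter_or, ← Fin.lt_def]
  rw [card_union_of_disjoint (disjoint_filter.2 fun j _ h h' => h.1.ne h'.1)]
  congr 1
  cases hd : d i <;> simp [filter_and, hd, filter_eq']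

theorem trueCount_of_le (d : Fin m → Bool) {k : ℕ} (hk : m ≤ k) :
    trueCount d k = #{i | d i = true} := by
  simp only [trueCount, fun i : Fin m => i.isLt.trans_le hk, true_and]

theorem trueCount_congr {k : ℕ} {d e : Fin m → Bool} (h : ∀ i : Fin m, i < k → d i = e i) :
    trueCount d k = trueCount e k := by
  unfold trueCount
  congr 1
  exact filter_congr fun i _ => and_congr_right fun hi => by rw [h i hi]

theorem monotone_trueCount (d : Fin m → Bool) : Monotone (trueCount d) :=
  fun _ _ hkl => card_le_card (monotone_filter_right _ fun _ _ h => ⟨h.1.trans_le hkl, h.2⟩)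

theorem trueCount_add_le (d : Fin m → Bool) (s t : ℕ) :
    trueCount d (s + t) ≤ trueCount d s + t := by
  induction t with
  | zero => exact le_rfl
  | succ t ih =>
    rcases lt_or_ge (s + t) m with h | h
    · have hstep := trueCount_succ d ⟨s + t, h⟩
      rw [← add_assoc, hstep, ← add_assoc]
      exact add_le_add ih (Bool.toNat_le _)
    · rw [trueCount_of_le d h] at ih
      rw [trueCount_of_le d (by omega)]
      omega

theorem trueCount_le (d : Fin m → Bool) (k : ℕ) : trueCount d k ≤ k := by
  simpa [trueCount_zero] using trueCount_add_le d 0 k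

theorem trueCount_update_succ (d : Fin m → Bool) (i : Fin m) (up : Bool) :
    trueCount (Function.update d i up) (i + 1) = trueCount d i + up.toNat := by
  rw [trueCount_succ, Function.update_self, trueCount_congr (e := d)]
  exact fun j hj => Function.update_of_ne (Fin.ne_of_lt hj) _ _

/-- The sum of the entries of `y` over the first `k + 1` cells of the up/right lattice path with
step directions `d`. -/
def pathSum (y : ℕ → ℕ → ℕ) (d : Fin m → Bool) (k : ℕ) : ℕ :=
  ∑ t ∈ range (k + 1), y (trueCount d t) (t - trueCount d t)

@[simp]
theorem pathSum_zero (y : ℕ → ℕ → ℕ) (d : Fin m → Bool) : pathSum y d 0 = y 0 0 := by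
  simp [pathSum, trueCount_zero]

theorem pathSum_succ (y : ℕ → ℕ → ℕ) (d : Fin m → Bool) (k : ℕ) : pathSum y d (k + 1) =
    pathSum y d k + y (trueCount d (k + 1)) (k + 1 - trueCount d (k + 1)) :=
  sum_range_succ _ _

theorem pathSum_congr (y : ℕ → ℕ → ℕ) {k : ℕ} {d e : Fin m → Bool}
    (h : ∀ i : Fin m, i < k → d i = e i) : pathSum y d k = pathSum y e k :=
  sum_congr rfl fun t ht => by
    rw [trueCount_congr fun i hi => h i (hi.trans_le (Nat.lt_succ_iff.1 (mem_range.1 ht)))]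

theorem pathSum_update_succ (y : ℕ → ℕ → ℕ) (d : Fin m → Bool) (i : Fin m) (up : Bool) :
    pathSum y (Function.update d i up) (i + 1) = pathSum y d i +
      y (trueCount d i + up.toNat) (i + 1 - (trueCount d i + up.toNat)) := by
  rw [pathSum_succ, trueCount_update_succ, pathSum_congr (e := d)]
  exact fun j hj => Function.update_of_ne (Fin.ne_of_lt hj) _ _

theorem pathSum_le_passageTime (y : ℕ → ℕ → ℕ) (d : Fin m → Bool) {k : ℕ} (hk : k ≤ m) :
    pathSum y d k ≤ passageTime y (trueCount d k + 1) (k - trueCount d k + 1) := by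
  induction k with
  | zero => simp [trueCount_zero, passageTime_succ_succ]
  | succ k ih =>
    have hstep := trueCount_succ d ⟨k, hk⟩
    rw [pathSum_succ, passageTime_succ_succ]
    refine Nat.add_le_add_right ((ih (Nat.le_of_succ_le hk)).trans ?_) _
    cases hd : d ⟨k, hk⟩
    · rw [hstep, hd, Bool.toNat_false, add_zero, Nat.succ_sub (trueCount_le d k)]
      exact le_max_right _ _
    · rw [hstep, hd, Bool.toNat_true, Nat.add_sub_add_right]
      exact le_max_left _ _

theorem exists_pathSum_eq_passageTime (y : ℕ → ℕ → ℕ) {p q : ℕ} (hpq : p + q ≤ m) :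
    ∃ d : Fin m → Bool, trueCount d (p + q) = p ∧
      pathSum y d (p + q) = passageTime y (p + 1) (q + 1) := by
  induction hk : p + q generalizing p q with
  | zero =>
    obtain ⟨rfl, rfl⟩ := Nat.add_eq_zero_iff.1 hk
    exact ⟨fun _ => false, trueCount_zero _, by simp [passageTime_succ_succ]⟩
  | succ k ih =>
    have hlast : (∃ r, p = r + 1 ∧ passageTime y (p + 1) q ≤ passageTime y p (q + 1)) ∨
        ∃ r, q = r + 1 ∧ passageTime y p (q + 1) ≤ passageTime y (p + 1) q := by
      rcases p with _ | p <;> rcases q with _ | q <;> simp [le_total] at hk ⊢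
    have hkm : k < m := by omega
    rw [passageTime_succ_succ]
    rcases hlast with ⟨r, rfl, hr⟩ | ⟨r, rfl, hr⟩
    · obtain ⟨d, hcount, hsum⟩ := @ih r q (by omega) (by omega)
      have hcount' := trueCount_update_succ d ⟨k, hkm⟩ true
      have hsum' := pathSum_update_succ y d ⟨k, hkm⟩ true
      refine ⟨_, hcount'.trans (by simp [hcount]), hsum'.trans ?_⟩
      simp [hcount, hsum, max_eq_left hr, ← hk]
    · obtain ⟨d, hcount, hsum⟩ := @ih p r (by omega) (by omega)
      have hcount' := trueCount_update_succ d ⟨k, hkm⟩ false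
      have hsum' := pathSum_update_succ y d ⟨k, hkm⟩ false
      refine ⟨_, hcount'.trans (by simp [hcount]), hsum'.trans ?_⟩
      simp [hcount, hsum, max_eq_right hr, ← hk]

theorem sum_pathCell_eq_pathSum {N : ℕ} (x : Fin (N + 1) → Fin (N + 1) → ℕ)
    {d : Fin (2 * N) → Bool} (hd : trueCount d (2 * N) = N) :
    ∑ k ∈ range (2 * N + 1),
        x (pathCell (N + 1) N.succ_pos d k).1 (pathCell (N + 1) N.succ_pos d k).2 =
      pathSum (extendByZero x) d (2 * N) := by
  refine sum_congr rfl fun k hk => ?_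
  have hk : k ≤ 2 * N := Nat.lt_succ_iff.1 (mem_range.1 hk)
  have hmono := monotone_trueCount d hk
  have hlip := trueCount_add_le d k (2 * N - k)
  rw [Nat.add_sub_cancel' hk] at hlip
  have hup : min (trueCount d k) N = trueCount d k := min_eq_left (by omega)
  have hright : min (k - trueCount d k) N = k - trueCount d k := min_eq_left (by omega)
  rw [← extendByZero_apply x]
  simp only [pathCell, Nat.add_sub_cancel, hup, hright]

theorem lastPassage_eq_passageTime (n : ℕ) (hn : 0 < n) (x : Fin n → Fin n → ℕ) :
    lastPassage n hn x = passageTime (extendByZero x) n n := by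
  obtain ⟨N, rfl⟩ : ∃ N, n = N + 1 := ⟨n - 1, by omega⟩
  have hpaths {d : Fin (2 * N) → Bool} : #{i | d i = true} = N ↔ trueCount d (2 * N) = N := by
    rw [trueCount_of_le d le_rfl]
  refine le_antisymm (Finset.sup_le fun d hd => ?_) ?_
  · have hd : trueCount d (2 * N) = N := hpaths.1 (mem_filter.1 hd).2
    refine (sum_pathCell_eq_pathSum x hd).trans_le ?_
    have hle := pathSum_le_passageTime (extendByZero x) d (le_refl (2 * N))
    rwa [hd, Nat.sub_eq_of_eq_add (two_mul N)] at hle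
  · obtain ⟨d, hd, hsum⟩ :=
      exists_pathSum_eq_passageTime (extendByZero x) (m := 2 * N) (two_mul N).ge
    rw [← two_mul] at hd hsum
    rw [← hsum, ← sum_pathCell_eq_pathSum x hd]
    exact le_sup (f := fun d : Fin (2 * N) → Bool => ∑ k ∈ range (2 * N + 1),
      x (pathCell (N + 1) hn d k).1 (pathCell (N + 1) hn d k).2)
      (mem_filter.2 ⟨mem_univ d, hpaths.2 hd⟩)

end LastPassage

section ProductSeries

variable {R ι : Type*} [NormedCommRing R]

theorem summable_norm_prod_pi {m : ℕ} {f : Fin m → ι → R} (hf : ∀ i, Summable fun k => ‖f i k‖) :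
    Summable fun x : Fin m → ι => ‖∏ i, f i (x i)‖ := by
  induction m with
  | zero => exact .of_finite
  | succ m ih =>
    refine (Fin.consEquiv fun _ => ι).summable_iff.1 ?_
    simpa [Function.comp_def, Fin.prod_univ_succ] using (hf 0).mul_norm (ih fun i => hf i.succ)

theorem hasSum_prod_pi {m : ℕ} {f : Fin m → ι → R} {s : Fin m → R}
    (hf : ∀ i, Summable fun k => ‖f i k‖) (hs : ∀ i, HasSum (f i) (s i)) :
    HasSum (fun x : Fin m → ι => ∏ i, f i (x i)) (∏ i, s i) := by
  induction m with
  | zero => simp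
  | succ m ih =>
    have htail := ih (fun i => hf i.succ) fun i => hs i.succ
    have hprod := summable_mul_of_summable_norm' (hf 0) (hs 0).summable
      (summable_norm_prod_pi fun i => hf i.succ) htail.summable
    refine (Fin.consEquiv fun _ => ι).hasSum_iff.1 ?_
    simpa [Function.comp_def, Fin.prod_univ_succ] using (hs 0).mul htail hprod

theorem hasSum_prod_geometric {𝕜 : Type*} [NormedField 𝕜] {k m : ℕ} {t : Fin k → Fin m → 𝕜}
    (ht : ∀ i j, ‖t i j‖ < 1) :
    HasSum (fun y : Fin k → Fin m → ℕ => ∏ i, ∏ j, t i j ^ y i j) (∏ i, ∏ j, (1 - t i j))⁻¹ := by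
  have hnorm (i : Fin k) (j : Fin m) : Summable fun e : ℕ => ‖t i j ^ e‖ := by
    simpa only [norm_pow] using summable_geometric_of_lt_one (norm_nonneg _) (ht i j)
  simp only [← prod_inv_distrib]
  exact hasSum_prod_pi (f := fun i (e : Fin m → ℕ) => ∏ j, t i j ^ e j)
    (fun i => summable_norm_prod_pi (hnorm i)) fun i =>
    hasSum_prod_pi (hnorm i) fun j => hasSum_geometric_of_norm_lt_one (ht i j)

end ProductSeries

section Probability

theorem finite_setOf_lastPassage_le (n l : ℕ) (hn : 0 < n) :
    {x | lastPassage n hn x ≤ l}.Finite := by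
  refine (Set.finite_Iic fun _ _ => l).subset fun x hx i j => ?_
  rw [← extendByZero_apply x]
  exact (le_passageTime i.isLt j.isLt).trans (lastPassage_eq_passageTime n hn x ▸ hx)

theorem hasSum_antitone_of_apply_zero_le {M : Type*} [AddCommMonoid M] [TopologicalSpace M]
    {n : ℕ} (l : ℕ) (hn : 0 < n) (g : (Fin n → ℕ) → M) :
    HasSum (fun μ : {μ : Fin n → ℕ // Antitone μ} => if μ.1 ⟨0, hn⟩ ≤ l then g μ.1 else 0)
      (∑ μ : Fin n → Fin (l + 1) with ∀ i j : Fin n, i ≤ j → μ j ≤ μ i, g fun i => μ i) := by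
  let e (ν : Fin n → Fin (l + 1)) (i : Fin n) : ℕ := ν i
  let G := {μ : Fin n → ℕ | Antitone μ}.indicator fun μ => if μ ⟨0, hn⟩ ≤ l then g μ else 0
  have he : Function.Injective e := fun ν ν' h => funext fun i => Fin.ext (congrFun h i)
  have hsupport : ∀ μ ∉ Set.range e, G μ = 0 := by
    intro μ hμ
    refine Set.indicator_apply_eq_zero.2 fun hanti => if_neg fun hl => hμ ?_
    have hlt (i : Fin n) : μ i < l + 1 :=
      Nat.lt_succ_of_le ((hanti (Fin.mk_le_of_le_val i.val.zero_le)).trans hl)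
    exact ⟨fun i => ⟨μ i, hlt i⟩, rfl⟩
  have hsum : ∑ ν, G (e ν) =
      ∑ μ : Fin n → Fin (l + 1) with ∀ i j : Fin n, i ≤ j → μ j ≤ μ i, g fun i => μ i := by
    rw [sum_filter]
    refine sum_congr rfl fun ν _ => ?_
    simp [G, e, Set.indicator_apply, Antitone, Nat.lt_succ_iff.1 (ν ⟨0, hn⟩).isLt]
  have hG : HasSum G (∑ ν, G (e ν)) :=
    (he.hasSum_iff hsupport).1 (hasSum_fintype (G ∘ e))
  rw [hsum] at hG
  exact (hasSum_subtype_iff_indicator (s := {μ | Antitone μ})).2 hG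

theorem tsum_lastPassage_le {R : Type*} [CommRing R] [TopologicalSpace R] [IsTopologicalRing R]
    [T2Space R] (n l : ℕ) (hn : 0 < n) (a b : Fin n → R) :
    ∑' x : {x : Fin n → Fin n → ℕ // lastPassage n hn x ≤ l}, ∏ i, ∏ j, (a i * b j) ^ x.1 i j =
      ∑ μ : Fin n → Fin (l + 1) with ∀ i j : Fin n, i ≤ j → μ j ≤ μ i,
        schur n (fun i => (μ i : ℕ)) a * schur n (fun i => (μ i : ℕ)) b := by
  let S := {x : Fin n → Fin n → ℕ | lastPassage n hn x ≤ l}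
  let w (x : Fin n → Fin n → ℕ) : R := ∏ i, ∏ j, (a i * b j) ^ x i j
  have hfinite : Finite S := finite_setOf_lastPassage_le n l hn
  have hS : HasSum (S.indicator w) (∑' x : S, w x) :=
    hasSum_subtype_iff_indicator.1 (Summable.of_finite (f := fun x : S => w x)).hasSum
  let f (μ : ℕ →₀ ℕ) : R := if μ 0 ≤ l then 1 else 0
  have hindicator : S.indicator w = fun x =>
      f (growth (extendByZero x) n n) * ∏ i, ∏ j, (a i * b j) ^ x i j := by
    ext x
    simp [S, w, f, Set.indicator_apply, growth_apply_zero, lastPassage_eq_passageTime]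
  rw [hindicator] at hS
  have hschur := hasSum_schur_mul_schur hS
  have hfirst (μ : Fin n → ℕ) : toShape μ 0 = μ ⟨0, hn⟩ := toShape_apply μ ⟨0, hn⟩
  simp only [f, hfirst, ite_mul, one_mul, zero_mul] at hschur
  exact hschur.unique
    (hasSum_antitone_of_apply_zero_le l hn fun μ => schur n μ a * schur n μ b)

theorem johansson_lpp_prob_general {𝕜 : Type*} [NormedField 𝕜] (n l : ℕ) (hn : 0 < n)
    (a b : Fin n → 𝕜) (hab : ∀ i j, ‖a i * b j‖ < 1) :
    ((∑' x : {x : Fin n → Fin n → ℕ // lastPassage n hn x ≤ l},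
        ∏ i, ∏ j, (1 - a i * b j) * (a i * b j) ^ x.1 i j) =
      (∏ i, ∏ j, (1 - a i * b j)) *
        ∑ μ : Fin n → Fin (l + 1) with ∀ i j : Fin n, i ≤ j → μ j ≤ μ i,
          schur n (fun i => (μ i : ℕ)) a * schur n (fun i => (μ i : ℕ)) b) ∧
    HasSum (fun μ : {μ : Fin n → ℕ // ∀ i j : Fin n, i ≤ j → μ j ≤ μ i} =>
      schur n μ.1 a * schur n μ.1 b) (∏ i, ∏ j, (1 - a i * b j))⁻¹ := by
  constructor
  · simp only [prod_mul_distrib, tsum_mul_left, tsum_lastPassage_le]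
  · have hgeometric := hasSum_prod_geometric hab
    have hschur := hasSum_schur_mul_schur (f := fun _ => (1 : 𝕜)) (a := a) (b := b)
      (s := (∏ i, ∏ j, (1 - a i * b j))⁻¹)
    simp only [one_mul] at hschur
    exact hschur hgeometric

end Probability

/-- in the Johansson model with geometric weights,
`Pr(L_n^□ ≤ l) = ∏_{i,j} (1 - a_i b_j) · Σ_{μ : μ_1 ≤ l} s_μ(a) s_μ(b)`; moreover the Cauchy
identity `∏_{i,j} (1 - a_i b_j)^{-1} = Σ_μ s_μ(a) s_μ(b)` normalizes the measure. -/
theorem johansson_lpp_prob (n l : ℕ) (hn : 0 < n) (a b : Fin n → ℝ)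
    (hab : ∀ i j, 0 < a i * b j ∧ a i * b j < 1) :
    ((∑' x : {x : Fin n → Fin n → ℕ // lastPassage n hn x ≤ l},
        ∏ i, ∏ j, (1 - a i * b j) * (a i * b j) ^ (x.1 i j)) =
      (∏ i, ∏ j, (1 - a i * b j)) *
        ∑ μ ∈ (Finset.univ : Finset (Fin n → Fin (l + 1))).filter
            (fun μ => ∀ i j : Fin n, i ≤ j → μ j ≤ μ i),
          schur n (fun i => (μ i : ℕ)) a * schur n (fun i => (μ i : ℕ)) b) ∧
    (∏ i, ∏ j, (1 - a i * b j))⁻¹ =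
      ∑' μ : {μ : Fin n → ℕ // ∀ i j : Fin n, i ≤ j → μ j ≤ μ i},
        schur n μ.1 a * schur n μ.1 b := by
  have ⟨hprob, hcauchy⟩ := johansson_lpp_prob_general n l hn a b fun i j =>
    (Real.norm_of_nonneg (hab i j).1.le).trans_lt (hab i j).2
  exact ⟨hprob, hcauchy.tsum_eq.symm⟩
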